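/- Let H₁, …, Hₙ : ℝⁿ × ℝⁿ → ℝ be C¹ functions of (q,p) that Poisson commute along the graph of a C¹ map p : ℝⁿ → ℝⁿ, i.e. {H_j, H_k}(q, p(q)) = 0 for all j, k and all q, and suppose for each j the function q ↦ H_j(q, p(q)) is constant. If for every q the n×n matrix M(q) with entries ∂H_j/∂p_k(q, p(q)) is invertible, then the Jacobian matrix Dp(q) = (∂p_j/∂q_k(q))_{jk} is symmetric for every q (i.e. the graph of p is Lagrangian). -/

import Mathlib

open Matrix

noncomputable section

/-- Partial derivative `∂H/∂qᵢ` of a function `H(q,p)` on `ℝⁿ × ℝⁿ`. -/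
def pdq (n : ℕ) (H : (Fin n → ℝ) × (Fin n → ℝ) → ℝ)
    (x : (Fin n → ℝ) × (Fin n → ℝ)) (i : Fin n) : ℝ :=
  fderiv ℝ H x (Pi.single i 1, 0)

/-- Partial derivative `∂H/∂pᵢ` of a function `H(q,p)` on `ℝⁿ × ℝⁿ`. -/
def pdp (n : ℕ) (H : (Fin n → ℝ) × (Fin n → ℝ) → ℝ)
    (x : (Fin n → ℝ) × (Fin n → ℝ)) (i : Fin n) : ℝ :=
  fderiv ℝ H x (0, Pi.single i 1)

/-- The Poisson bracket `{F,G} = Σᵢ (∂F/∂qᵢ ∂G/∂pᵢ − ∂F/∂pᵢ ∂G/∂qᵢ)`. -/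
def poissonBracket (n : ℕ) (F G : (Fin n → ℝ) × (Fin n → ℝ) → ℝ)
    (x : (Fin n → ℝ) × (Fin n → ℝ)) : ℝ :=
  ∑ i, (pdq n F x i * pdp n G x i - pdp n F x i * pdq n G x i)

/-!
Let `A` and `M` be the matrices of the partial derivatives `∂H_j/∂q_k` and `∂H_j/∂p_k` at the point
`(q, p q)`, and `P` the Jacobian matrix of `p` at `q`. The functions `H_j` Poisson commute at this
point exactly when `A * Mᵀ` is symmetric. Differentiating the constant functions `H_j (q, p q)`
gives `A = -(M * P)`, so `M * P * Mᵀ` is symmetric; cancelling `M` on both sides, so is `P`.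
-/

section MatrixCancellation

variable {m n o R : Type*} [Fintype n]

lemma eq_of_mul_eq_mul_of_mulVec_injective [NonUnitalNonAssocSemiring R] {M : Matrix m n R}
    (hM : Function.Injective M.mulVec) {X Y : Matrix n o R} (h : M * X = M * Y) : X = Y := by
  ext i k
  have hcol : M *ᵥ X.col k = M *ᵥ Y.col k := funext fun j => congrFun₂ h j k
  exact congrFun (hM hcol) i

lemma isSymm_of_isSymm_mul_mul_transpose [NonUnitalCommSemiring R] {M : Matrix m n R}
    (hM : Function.Injective M.mulVec) {P : Matrix n n R} (h : (M * P * Mᵀ).IsSymm) :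
    P.IsSymm := by
  have hleft : M * (Pᵀ * Mᵀ) = M * (P * Mᵀ) := by
    simpa only [transpose_mul, transpose_transpose, Matrix.mul_assoc] using h.eq
  have hright : Pᵀ * Mᵀ = P * Mᵀ := eq_of_mul_eq_mul_of_mulVec_injective hM hleft
  have htranspose : M * P = M * Pᵀ := by
    simpa only [transpose_mul, transpose_transpose] using congrArg transpose hright
  exact (eq_of_mul_eq_mul_of_mulVec_injective hM htranspose).symm

end MatrixCancellation

section PartialDerivatives

variable {n : ℕ} {ι : Type*}

lemma fderiv_apply_eq_pdq_dotProduct_add_pdp_dotProduct (F : (Fin n → ℝ) × (Fin n → ℝ) → ℝ)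
    (x : (Fin n → ℝ) × (Fin n → ℝ)) (v w : Fin n → ℝ) :
    fderiv ℝ F x (v, w) = pdq n F x ⬝ᵥ v + pdp n F x ⬝ᵥ w := by
  have hq : pdq n F x ⬝ᵥ v = fderiv ℝ F x (v, 0) :=
    DFunLike.congr_fun ((dotProductEquiv ℝ (Fin n)).apply_symm_apply
      ((fderiv ℝ F x).toLinearMap ∘ₗ .inl ℝ _ _)) v
  have hp : pdp n F x ⬝ᵥ w = fderiv ℝ F x (0, w) :=
    DFunLike.congr_fun ((dotProductEquiv ℝ (Fin n)).apply_symm_apply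
      ((fderiv ℝ F x).toLinearMap ∘ₗ .inr ℝ _ _)) w
  rw [hq, hp, ← map_add, Prod.mk_add_mk, add_zero, zero_add]

lemma poissonBracket_eq_dotProduct_sub_dotProduct (F G : (Fin n → ℝ) × (Fin n → ℝ) → ℝ)
    (x : (Fin n → ℝ) × (Fin n → ℝ)) :
    poissonBracket n F G x = pdq n F x ⬝ᵥ pdp n G x - pdp n F x ⬝ᵥ pdq n G x :=
  Finset.sum_sub_distrib _ _

/-- The matrix `(∂H_j/∂q_k)` of position derivatives at `x` of a family of functions on phase
space; the index type of the family is arbitrary. -/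
def positionJacobian (H : ι → (Fin n → ℝ) × (Fin n → ℝ) → ℝ) (x : (Fin n → ℝ) × (Fin n → ℝ)) :
    Matrix ι (Fin n) ℝ :=
  Matrix.of fun j k => pdq n (H j) x k

/-- The matrix `(∂H_j/∂p_k)` of momentum derivatives at `x` of a family of functions on phase
space; the index type of the family is arbitrary. -/
def momentumJacobian (H : ι → (Fin n → ℝ) × (Fin n → ℝ) → ℝ) (x : (Fin n → ℝ) × (Fin n → ℝ)) :
    Matrix ι (Fin n) ℝ :=
  Matrix.of fun j k => pdp n (H j) x k

lemma isSymm_positionJacobian_mul_transpose_momentumJacobian_iff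
    (H : ι → (Fin n → ℝ) × (Fin n → ℝ) → ℝ) (x : (Fin n → ℝ) × (Fin n → ℝ)) :
    (positionJacobian H x * (momentumJacobian H x)ᵀ).IsSymm ↔
      ∀ j k, poissonBracket n (H j) (H k) x = 0 := by
  have hentry (j k : ι) : (positionJacobian H x * (momentumJacobian H x)ᵀ) j k =
      pdq n (H j) x ⬝ᵥ pdp n (H k) x := rfl
  simp only [IsSymm.ext_iff, hentry, poissonBracket_eq_dotProduct_sub_dotProduct, sub_eq_zero,
    dotProduct_comm (pdp n _ x), eq_comm]

/-- The Jacobian matrix `(∂p_j/∂q_k)` at `q` of a map `p` assigning a momentum to each position. -/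
def jacobian (p : (Fin n → ℝ) → Fin n → ℝ) (q : Fin n → ℝ) : Matrix (Fin n) (Fin n) ℝ :=
  LinearMap.toMatrix' (fderiv ℝ p q).toLinearMap

lemma fderiv_comp_graph_single {F : (Fin n → ℝ) × (Fin n → ℝ) → ℝ} {p : (Fin n → ℝ) → Fin n → ℝ}
    {q : Fin n → ℝ} (hF : DifferentiableAt ℝ F (q, p q)) (hp : DifferentiableAt ℝ p q)
    (k : Fin n) :
    fderiv ℝ (fun x => F (x, p x)) q (Pi.single k 1) =
      pdq n F (q, p q) k + pdp n F (q, p q) ⬝ᵥ (jacobian p q).col k := by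
  have hgraph : HasFDerivAt (fun x => (x, p x))
      ((ContinuousLinearMap.id ℝ (Fin n → ℝ)).prod (fderiv ℝ p q)) q :=
    (hasFDerivAt_id q).prodMk hp.hasFDerivAt
  have hchain : fderiv ℝ (fun x => F (x, p x)) q (Pi.single k 1) =
      fderiv ℝ F (q, p q) (Pi.single k 1, fderiv ℝ p q (Pi.single k 1)) :=
    DFunLike.congr_fun (hF.hasFDerivAt.comp q hgraph).fderiv _
  rw [hchain, fderiv_apply_eq_pdq_dotProduct_add_pdp_dotProduct, dotProduct_single_one]
  rfl

lemma positionJacobian_eq_neg_momentumJacobian_mul_jacobian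
    {H : ι → (Fin n → ℝ) × (Fin n → ℝ) → ℝ} {p : (Fin n → ℝ) → Fin n → ℝ} {q : Fin n → ℝ}
    (hH : ∀ j, DifferentiableAt ℝ (H j) (q, p q)) (hp : DifferentiableAt ℝ p q)
    (hcrit : ∀ j, fderiv ℝ (fun x => H j (x, p x)) q = 0) :
    positionJacobian H (q, p q) = -(momentumJacobian H (q, p q) * jacobian p q) := by
  ext j k
  have hzero := fderiv_comp_graph_single (hH j) hp k
  rw [hcrit j] at hzero
  exact eq_neg_of_add_eq_zero_left hzero.symm

end PartialDerivatives

theorem jacobian_symmetric_of_poisson_commuting_general {n : ℕ} {ι : Type*}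
    {H : ι → (Fin n → ℝ) × (Fin n → ℝ) → ℝ} {p : (Fin n → ℝ) → Fin n → ℝ} {q : Fin n → ℝ}
    (hH : ∀ j, DifferentiableAt ℝ (H j) (q, p q)) (hp : DifferentiableAt ℝ p q)
    (hcomm : ∀ j k, poissonBracket n (H j) (H k) (q, p q) = 0)
    (hcrit : ∀ j, fderiv ℝ (fun x => H j (x, p x)) q = 0)
    (hM : Function.Injective (momentumJacobian H (q, p q)).mulVec) :
    (jacobian p q).IsSymm := by
  have hsymm : (positionJacobian H (q, p q) * (momentumJacobian H (q, p q))ᵀ).IsSymm :=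
    (isSymm_positionJacobian_mul_transpose_momentumJacobian_iff H (q, p q)).2 hcomm
  rw [positionJacobian_eq_neg_momentumJacobian_mul_jacobian hH hp hcrit, Matrix.neg_mul,
    isSymm_neg_iff] at hsymm
  exact isSymm_of_isSymm_mul_mul_transpose hM hsymm

/-- **Poisson-commuting integrals with nondegenerate momenta force the graph to be
Lagrangian.**  Let `H₁, …, Hₙ` be `C¹` functions of `(q,p)` Poisson commuting along the
graph of a `C¹` map `p : ℝⁿ → ℝⁿ`, each constant on this graph.  If the matrix
`M(q) = (∂H_j/∂p_k (q, p q))` is invertible for every `q`, then the Jacobian matrix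
`Dp(q)` is symmetric for every `q` (i.e. the graph of `p` is Lagrangian). -/
theorem jacobian_symmetric_of_poisson_commuting
    (n : ℕ) (H : Fin n → (Fin n → ℝ) × (Fin n → ℝ) → ℝ)
    (hH : ∀ j, ContDiff ℝ 1 (H j))
    (p : (Fin n → ℝ) → (Fin n → ℝ)) (hp : ContDiff ℝ 1 p)
    (hcomm : ∀ (j k : Fin n) (q : Fin n → ℝ),
      poissonBracket n (H j) (H k) (q, p q) = 0)
    (hconst : ∀ (j : Fin n) (q q' : Fin n → ℝ), H j (q, p q) = H j (q', p q'))
    (hM : ∀ q : Fin n → ℝ,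
      IsUnit (Matrix.of fun j k => pdp n (H j) (q, p q) k)) :
    ∀ (q : Fin n → ℝ) (j k : Fin n),
      fderiv ℝ p q (Pi.single k 1) j = fderiv ℝ p q (Pi.single j 1) k := by
  intro q j k
  have hcrit (i : Fin n) : fderiv ℝ (fun x => H i (x, p x)) q = 0 := by
    rw [funext fun x => hconst i x q, fderiv_const_apply]
  exact (jacobian_symmetric_of_poisson_commuting_general
    (fun i => (hH i).differentiable one_ne_zero _) (hp.differentiable one_ne_zero q)
    (fun i l => hcomm i l q) hcrit (mulVec_injective_of_isUnit (hM q))).apply k j
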